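/- Let σ > 0. There exists R₀ = R₀(m,n,σ) ≥ 1 such that for every R ≥ R₀ the following holds, with δ = R^{-m(m+n)²}, δ* = R^{-n(m+n)²}, τ = m/(m+n). Let i ∈ ℕ and let B ⊆ ℒ^{mn} be a ball of radius less than R^{-(m+n)(τ+i)} with ‖A‖_∞ ≤ σ for all A ∈ B. Suppose there is no q ∈ 𝔽[X]^{m+n} and no A ∈ B satisfying both 0 < max_{1≤l≤m} ‖q_l‖ < δ R^{n(τ+i)} and max_{1≤l'≤n} ‖q·C_{l'}(Ā)‖ < δ R^{-m(τ+i)-n}. Then the set of q ∈ 𝔽[X]^{m+n} such that for some A ∈ B both 0 < max_{1≤l'≤n} ‖q_{l'}‖ < δ* R^{m(1+i)} and max_{1≤l≤m} ‖q·C_l(Ā^*)‖ < δ* R^{-n(1+i)-m} hold contains at most m linearly independent points. -/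

import Mathlib

/-!
Common setup: the field `ℒ = 𝔽((X⁻¹))` of formal Laurent series with coefficients
in a finite field `𝔽` of `k` elements.  We realize `ℒ` as `LaurentSeries 𝔽`
(Hahn series over `ℤ`) in the variable `T = X⁻¹`, so that `X` corresponds to `T⁻¹`
and the polynomial ring `𝔽[X]` corresponds to series supported on nonpositive
exponents.  The absolute value of `x = Σ_{i ≤ N} a_i X^i` (with `a_N ≠ 0`) is
`k^N`, i.e. `k^(-order x)` in terms of the `T`-adic order.
-/

open scoped Classical ENNReal NNReal
open MeasureTheory

noncomputable section

namespace FSBad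

/-- The field `ℒ = 𝔽((X⁻¹))`. -/
abbrev L (𝔽 : Type) [Field 𝔽] : Type := LaurentSeries 𝔽

variable {𝔽 : Type} [Field 𝔽] [Fintype 𝔽]

/-- The absolute value `‖·‖` on `ℒ`: `‖x‖ = k^(deg_X x)`, `‖0‖ = 0`. -/
def lnorm (x : L 𝔽) : ℝ := if x = 0 then 0 else (Fintype.card 𝔽 : ℝ) ^ (-x.order)

/-- Membership in the polynomial ring `𝔽[X] ⊆ ℒ` (polynomials in `X = T⁻¹`). -/
def IsPoly (x : L 𝔽) : Prop := ∀ i : ℤ, 0 < i → x.coeff i = 0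

/-- The height (sup-norm) `‖·‖_∞` on `ℒ^ι`. -/
def vnorm {ι : Type*} (x : ι → L 𝔽) : ℝ := ⨆ i, lnorm (x i)

/-- The closed ball in `ℒ^ι` with centre `c` and radius `ρ`. -/
def vball {ι : Type*} (c : ι → L 𝔽) (ρ : ℝ) : Set (ι → L 𝔽) :=
  {x | vnorm (fun i => x i - c i) ≤ ρ}

/-- `m × n` matrices over `ℒ`, identified with `ℒ^(mn)`. -/
abbrev Mat (𝔽 : Type) [Field 𝔽] (m n : ℕ) : Type := Matrix (Fin m) (Fin n) (L 𝔽)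

/-- The height of a matrix, i.e. the sup-norm on `ℒ^(mn)`. -/
def mnorm {m n : ℕ} (A : Mat 𝔽 m n) : ℝ := ⨆ p : Fin m × Fin n, lnorm (A p.1 p.2)

/-- The closed ball in `ℒ^(mn)` with centre `c` and radius `ρ`. -/
def mball {m n : ℕ} (c : Mat 𝔽 m n) (ρ : ℝ) : Set (Mat 𝔽 m n) :=
  {A | mnorm (A - c) ≤ ρ}

/-- The distance `⟨x⟩` from `x ∈ ℒ^h` to the polynomial lattice `𝔽[X]^h`. -/
def latDist {h : ℕ} (x : Fin h → L 𝔽) : ℝ :=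
  sInf {r : ℝ | ∃ p : Fin h → L 𝔽, (∀ i, IsPoly (p i)) ∧ r = vnorm (fun i => x i - p i)}

/-- The set `𝔅(m,n)` of badly approximable systems of `m` linear forms in `n`
variables over `ℒ`. -/
def Bad (𝔽 : Type) [Field 𝔽] [Fintype 𝔽] (m n : ℕ) : Set (Mat 𝔽 m n) :=
  {A | ∃ K : ℝ, 0 < K ∧ ∀ q : Fin m → L 𝔽, (∀ i, IsPoly (q i)) → q ≠ 0 →
    latDist (Matrix.vecMul q A) ^ n > K / vnorm q ^ m}

/-- The Hausdorff `s`-measure of `E ⊆ ℒ^(mn)`, defined through countable covers by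
balls of radii `< δ`, letting `δ → 0` (the infimum over `δ`-covers is nonincreasing
in `δ`, so the limit is the supremum over `δ > 0`). -/
def hMeasure {m n : ℕ} (s : ℝ) (E : Set (Mat 𝔽 m n)) : ℝ≥0∞ :=
  ⨆ (δ : ℝ) (_ : 0 < δ),
    ⨅ (c : ℕ → Mat 𝔽 m n) (ρ : ℕ → ℝ) (_ : ∀ i, 0 < ρ i ∧ ρ i < δ)
      (_ : E ⊆ ⋃ i, mball (c i) (ρ i)), ∑' i, ENNReal.ofReal (ρ i ^ s)

/-- The Hausdorff dimension of `E ⊆ ℒ^(mn)`. -/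
def hdim {m n : ℕ} (E : Set (Mat 𝔽 m n)) : ℝ :=
  sInf {s : ℝ | 0 ≤ s ∧ hMeasure s E = 0}

/-! ### Schmidt `(α,β)`-games on `ℒ^(mn)` -/

/-- A formal ball: an element of `Ω = ℒ^(mn) × ℝ`. -/
structure FBall (𝔽 : Type) [Field 𝔽] (m n : ℕ) where
  /-- centre -/
  c : Mat 𝔽 m n
  /-- radius -/
  r : ℝ

/-- Formal inclusion of formal balls: `(c₁,ρ₁) ⊆ (c₂,ρ₂)` iff `ρ₁ + ‖c₁ - c₂‖_∞ ≤ ρ₂`. -/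
def FBall.ssub {m n : ℕ} (B₁ B₂ : FBall 𝔽 m n) : Prop :=
  B₁.r + mnorm (B₁.c - B₂.c) ≤ B₂.r

/-- The subset of `ℒ^(mn)` determined by a formal ball. -/
def FBall.toSet {m n : ℕ} (B : FBall 𝔽 m n) : Set (Mat 𝔽 m n) := mball B.c B.r

/-- A strategy for White: given the balls `B₁, …, B_{i+1}` chosen by Black so far,
produce White's next ball. -/
abbrev Strategy (𝔽 : Type) [Field 𝔽] (m n : ℕ) : Type :=
  (i : ℕ) → (Fin (i + 1) → FBall 𝔽 m n) → FBall 𝔽 m n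

/-- White's move at stage `i` when following strategy `str` against Black's balls `B`. -/
def wMove {m n : ℕ} (str : Strategy 𝔽 m n) (B : ℕ → FBall 𝔽 m n) (i : ℕ) : FBall 𝔽 m n :=
  str i fun j => B j.1

/-- Black's move `B_{j+2}` is legal (for parameter `β`): it is a formal subset of
White's ball `W_{j+1}` and has radius `β · ρ(W_{j+1})`. -/
def BlackOk {m n : ℕ} (β : ℝ) (str : Strategy 𝔽 m n) (B : ℕ → FBall 𝔽 m n) (j : ℕ) : Prop :=
  (B (j + 1)).ssub (wMove str B j) ∧ (B (j + 1)).r = β * (wMove str B j).r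

/-- White's move `W_{i+1}` is legal (for parameter `α`): it is a formal subset of
Black's ball `B_{i+1}` and has radius `α · ρ(B_{i+1})`. -/
def WhiteOk {m n : ℕ} (α : ℝ) (str : Strategy 𝔽 m n) (B : ℕ → FBall 𝔽 m n) (i : ℕ) : Prop :=
  (wMove str B i).ssub (B i) ∧ (wMove str B i).r = α * (B i).r

/-- `str` is a winning strategy for White in the `(α,β;S)`-game: against any
sequence of Black balls, White's moves are legal as long as Black has played
legally so far, and if the whole play is legal then the intersection of the
chosen balls is contained in `S`. -/
def WinningStrategy {m n : ℕ} (α β : ℝ) (S : Set (Mat 𝔽 m n)) (str : Strategy 𝔽 m n) : Prop :=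
  ∀ B : ℕ → FBall 𝔽 m n, 0 ≤ (B 0).r →
    (∀ i, (∀ j < i, BlackOk β str B j) → WhiteOk α str B i) ∧
    ((∀ j, BlackOk β str B j) → (⋂ i, (B i).toSet) ⊆ S)

/-- `S` is `(α,β)`-winning. -/
def IsWinningAB {m n : ℕ} (α β : ℝ) (S : Set (Mat 𝔽 m n)) : Prop :=
  ∃ str : Strategy 𝔽 m n, WinningStrategy α β S str

/-- `S` is `α`-winning. -/
def IsWinningA {m n : ℕ} (α : ℝ) (S : Set (Mat 𝔽 m n)) : Prop :=
  ∀ β : ℝ, 0 < β → β < 1 → IsWinningAB α β S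

/-- The winning dimension of `S` (a supremum of a set of reals, which is `0` by
convention when the set is empty). -/
def windim {m n : ℕ} (S : Set (Mat 𝔽 m n)) : ℝ :=
  sSup {α : ℝ | 0 < α ∧ α < 1 ∧ IsWinningA α S}

/-! ### The matrices `Ā`, `Ā^*` and the quantities `M_v`, `D_v`, `∇D_v` -/

/-- `Ā = [[A, I_m], [I_n, 0]]`. Rows are indexed by `Fin m ⊕ Fin n`
(coordinates `q_1, …, q_{m+n}`), columns by `Fin n ⊕ Fin m`. -/
def Abar {m n : ℕ} (A : Mat 𝔽 m n) : Matrix (Fin m ⊕ Fin n) (Fin n ⊕ Fin m) (L 𝔽) :=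
  Matrix.fromBlocks A 1 1 0

/-- `Ā^* = [[Aᵀ, I_n], [I_m, 0]]`. Rows are indexed by `Fin n ⊕ Fin m`,
columns by `Fin m ⊕ Fin n`. -/
def AbarStar {m n : ℕ} (A : Mat 𝔽 m n) : Matrix (Fin n ⊕ Fin m) (Fin m ⊕ Fin n) (L 𝔽) :=
  Matrix.fromBlocks A.transpose 1 1 0

/-- The standard bilinear form `x·y = Σ_i x_i y_i` on `ℒ^ι`. -/
def dotL {ι : Type*} [Fintype ι] (x y : ι → L 𝔽) : L 𝔽 := ∑ i, x i * y i

/-- Strictly increasing `v`-tuples `1 ≤ i_1 < ⋯ < i_v ≤ m`. -/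
def IncTuple (v m : ℕ) : Type := {f : Fin v → Fin m // StrictMono f}

/-- The vector `M_v(A) ∈ ℒ^(C(m,v)²)` of the determinants
`det (y_{i_r} · C_{j_s}(Ā^*))_{1 ≤ r,s ≤ v}` over all strictly increasing index
tuples.  (For `v = 0` every coordinate is an empty determinant, i.e. `1`.) -/
def MvVec {m n : ℕ} (y : Fin m → (Fin n ⊕ Fin m → L 𝔽)) (v : ℕ) (A : Mat 𝔽 m n) :
    IncTuple v m × IncTuple v m → L 𝔽 := fun p =>
  Matrix.det (Matrix.of fun r s : Fin v =>
    dotL (y (p.1.1 r)) fun t => AbarStar A t (Sum.inl (p.2.1 s)))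

/-- `‖M_v(A)‖_∞`. -/
def MvNorm {m n : ℕ} (y : Fin m → (Fin n ⊕ Fin m → L 𝔽)) (v : ℕ) (A : Mat 𝔽 m n) : ℝ :=
  vnorm (MvVec y v A)

/-- `M_v(K) = max_{A ∈ K} ‖M_v(A)‖_∞` for `K ⊆ ℒ^(mn)`. -/
def MvSet {m n : ℕ} (y : Fin m → (Fin n ⊕ Fin m → L 𝔽)) (v : ℕ) (K : Set (Mat 𝔽 m n)) : ℝ :=
  sSup {r : ℝ | ∃ A ∈ K, r = MvNorm y v A}

/-- `D_v(A) = det (y_h · C_l(Ā^*))_{1 ≤ h,l ≤ v}`. -/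
def Dv {m n : ℕ} (y : Fin m → (Fin n ⊕ Fin m → L 𝔽)) (v : ℕ) (hv : v ≤ m)
    (A : Mat 𝔽 m n) : L 𝔽 :=
  Matrix.det (Matrix.of fun h l : Fin v =>
    dotL (y (Fin.castLE hv h)) fun t => AbarStar A t (Sum.inl (Fin.castLE hv l)))

/-- The discrete gradient `∇D_v(A) ∈ ℒ^(mn)`, with coordinates
`D_v(A + E_{ij}) - D_v(A)`. -/
def gradDv {m n : ℕ} (y : Fin m → (Fin n ⊕ Fin m → L 𝔽)) (v : ℕ) (hv : v ≤ m)
    (A : Mat 𝔽 m n) : Fin m × Fin n → L 𝔽 := fun p =>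
  Dv y v hv (A + Matrix.single p.1 p.2 1) - Dv y v hv A

/-- `y_1, …, y_m ∈ ℒ^(m+n)` form an orthonormal system: `y_h · y_{h'} = δ_{h h'}`
and `‖t_1 y_1 + ⋯ + t_m y_m‖_∞ = max_h ‖t_h‖`. -/
def OrthoSystem {m n : ℕ} (y : Fin m → (Fin n ⊕ Fin m → L 𝔽)) : Prop :=
  (∀ h h', dotL (y h) (y h') = if h = h' then 1 else 0) ∧
  (∀ t : Fin m → L 𝔽, vnorm (fun r => ∑ h, t h * y h r) = ⨆ h, lnorm (t h))

/-! ### Distance functions, parallelepipeds and successive minima -/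

/-- The `j`-th successive minimum of a distance function `F` on `ℒ^N`: the infimum
of all `λ > 0` such that `{F < λ}` contains `j` linearly independent points of
`𝔽[X]^N`. -/
def succMin {N : ℕ} (F : (Fin N → L 𝔽) → ℝ) (j : ℕ) : ℝ :=
  sInf {lam : ℝ | 0 < lam ∧ ∃ v : Fin j → (Fin N → L 𝔽),
    (∀ r, ∀ i, IsPoly (v r i)) ∧ LinearIndependent (L 𝔽) v ∧ ∀ r, F (v r) < lam}

/-- The distance function `F_A(x) = max_j c_j⁻¹ ‖Σ_i x_i a_{ij}‖`. -/
def FA {N : ℕ} (A : Matrix (Fin N) (Fin N) (L 𝔽)) (c : Fin N → ℝ)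
    (x : Fin N → L 𝔽) : ℝ :=
  ⨆ j, (c j)⁻¹ * lnorm (∑ i, x i * A i j)

/-- The parallelepiped `P_A(λ) = {x ∈ ℒ^N : F_A(x) < λ}`. -/
def PA {N : ℕ} (A : Matrix (Fin N) (Fin N) (L 𝔽)) (c : Fin N → ℝ) (lam : ℝ) :
    Set (Fin N → L 𝔽) := {x | FA A c x < lam}

/-- The polar distance function `F_A^*(y) = sup_{x ≠ 0} ‖x·y‖ / F_A(x)`. -/
def FAstar {N : ℕ} (A : Matrix (Fin N) (Fin N) (L 𝔽)) (c : Fin N → ℝ)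
    (y : Fin N → L 𝔽) : ℝ :=
  ⨆ x : {x : Fin N → L 𝔽 // x ≠ 0}, lnorm (dotL x.1 y) / FA A c x.1

/-! ### Haar measure, characterized by translation invariance and normalization -/

/-- The Borel σ-algebra on `ℒ^N`, generated by the balls. -/
def vecSigma (𝔽 : Type) [Field 𝔽] [Fintype 𝔽] (N : ℕ) : MeasurableSpace (Fin N → L 𝔽) :=
  MeasurableSpace.generateFrom {s | ∃ c ρ, (0 : ℝ) < ρ ∧ s = vball c ρ}

/-- `μ` is the Haar measure on `ℒ^N`: translation invariant and normalized so that
the unit ball `I^N` has measure `1` (these properties determine it uniquely). -/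
def IsHaarVec {N : ℕ} (μ : @Measure (Fin N → L 𝔽) (vecSigma 𝔽 N)) : Prop :=
  (∀ (v : Fin N → L 𝔽) (s : Set (Fin N → L 𝔽)), μ ((fun x => x + v) ⁻¹' s) = μ s) ∧
  μ {x | ∀ i, lnorm (x i) < 1} = 1

/-- The Borel σ-algebra on `ℒ^(mn)`, generated by the balls. -/
def matSigma (𝔽 : Type) [Field 𝔽] [Fintype 𝔽] (m n : ℕ) : MeasurableSpace (Mat 𝔽 m n) :=
  MeasurableSpace.generateFrom {s | ∃ c ρ, (0 : ℝ) < ρ ∧ s = mball c ρ}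

/-- `μ` is the Haar measure on `ℒ^(mn)`: translation invariant and normalized so
that the unit ball `I^(mn)` has measure `1`. -/
def IsHaarMat {m n : ℕ} (μ : @Measure (Mat 𝔽 m n) (matSigma 𝔽 m n)) : Prop :=
  (∀ (v : Mat 𝔽 m n) (s : Set (Mat 𝔽 m n)), μ ((fun x => x + v) ⁻¹' s) = μ s) ∧
  μ {A | ∀ i j, lnorm (A i j) < 1} = 1

/-! ### The constants of Section 3 -/

/-- `τ = m/(m+n)`. -/
def tau (m n : ℕ) : ℝ := m / (m + n)

/-- `δ = R^(-m(m+n)²)`. -/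
def del (R : ℝ) (m n : ℕ) : ℝ := R ^ (-((m : ℝ) * ((m : ℝ) + n) ^ 2))

/-- `δ* = R^(-n(m+n)²)`. -/
def delStar (R : ℝ) (m n : ℕ) : ℝ := R ^ (-((n : ℝ) * ((m : ℝ) + n) ^ 2))

/-!
The theorem is a transference principle. Put `k = |𝔽|` and fix a matrix `A`. Polynomials `a` with
`‖a_l‖ < k^t` for which `aA` is within `k^(-s)` of the polynomial lattice are the left kernel of a
Hankel matrix over `𝔽` built from the coefficients of `A`. If this kernel is trivial, the Hankel
matrix is surjective on columns, and surjectivity says that every target is approximated by the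
dual forms `(x, Ax + y)` to within `(k^s, k^(-t))`. Approximating multiples of the standard basis
yields a full set of linearly independent lattice points of size at most `(k^s, k^(-t))`.

Suppose now that `m + 1` independent lattice points of much smaller size `(X, Y)` exist. Completing
them to a basis by `n - 1` points of the full set gives a polynomial determinant, which is nonzero,
hence at least `1`, but is also at most `M^(n-1) X^n Y^m`, where `M` is the ratio of the two
sizes. With `δ*` as in the theorem the bound is less than `1`, so the left kernel is nontrivial and
provides the forbidden solution `q`. The ball is so small that `Ax + y` may be computed at its
centre for all of the dual solutions.
-/

section Nonarchimedean

open Matrix Module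

variable {K : Type*} [Field K] {abv : AbsoluteValue K ℝ} {ι κ : Type*}

lemma abv_sum_le (hna : IsNonarchimedean abv) {s : Finset ι} {f : ι → K} {B : ℝ} (hB : 0 ≤ B)
    (hf : ∀ i ∈ s, abv (f i) ≤ B) : abv (∑ i ∈ s, f i) ≤ B :=
  Finset.sum_induction f (abv · ≤ B) (fun x y hx hy => (hna x y).trans (max_le hx hy))
    (by simpa using hB) hf

lemma abv_sum_lt (hna : IsNonarchimedean abv) {s : Finset ι} {f : ι → K} {B : ℝ} (hB : 0 < B)
    (hf : ∀ i ∈ s, abv (f i) < B) : abv (∑ i ∈ s, f i) < B :=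
  Finset.sum_induction f (abv · < B) (fun x y hx hy => (hna x y).trans_lt (max_lt hx hy))
    (by simpa using hB) hf

lemma exists_linearIndependent_sumElim_of_span_eq_top {V : Type*} [AddCommGroup V] [Module K V]
    [FiniteDimensional K V] [Fintype κ] {v : κ → V} {u : ι → V} (hv : LinearIndependent K v)
    (hu : Submodule.span K (Set.range u) = ⊤) :
    ∃ j : Fin (finrank K V - Fintype.card κ) → ι, LinearIndependent K (Sum.elim v (u ∘ j)) := by
  let W := Submodule.span K (Set.range v)
  obtain ⟨κ', j, -, hspan, hj⟩ := exists_linearIndependent' K (W.mkQ ∘ u)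
  have := hj.finite_of_isNoetherian
  have := Fintype.ofFinite κ'
  have hquot : Submodule.span K (Set.range ((W.mkQ ∘ u) ∘ j)) = ⊤ := by
    rw [hspan, Set.range_comp, ← Submodule.map_span, hu, Submodule.map_top, Submodule.range_mkQ]
  have hcard : Fintype.card κ' = finrank K V - Fintype.card κ := by
    rw [← finrank_eq_card_basis (Basis.mk hj hquot.ge), W.finrank_quotient, finrank_span_eq_card hv]
  let e := Fintype.equivFinOfCardEq hcard
  have hsum : LinearIndependent K (Sum.elim v (u ∘ j)) :=
    (linearIndependent_span hv).sumElim_of_quotient _ hj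
  refine ⟨j ∘ e.symm, ?_⟩
  convert hsum.comp (Sum.map id e.symm) (Function.injective_id.sumMap e.symm.injective)
  rw [Sum.elim_comp_map]
  rfl

lemma abv_det_le_prod_mul_prod [Fintype ι] [DecidableEq ι] (hna : IsNonarchimedean abv)
    {Z : Matrix ι ι K} {a b : ι → ℝ} (h : ∀ i j, abv (Z i j) ≤ a i * b j) :
    abv Z.det ≤ (∏ i, a i) * ∏ j, b j := by
  have hB : 0 ≤ (∏ i, a i) * ∏ j, b j := by
    rw [← Finset.prod_mul_distrib]
    exact Finset.prod_nonneg fun i _ => (abv.nonneg _).trans (h i i)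
  rw [det_apply]
  refine abv_sum_le hna hB fun σ _ => ?_
  calc abv (Equiv.Perm.sign σ • ∏ i, Z (σ i) i) = ∏ i, abv (Z (σ i) i) := by
        rw [abv.map_units_int_smul, map_prod]
    _ ≤ ∏ i, a (σ i) * b i := Finset.prod_le_prod (fun i _ => abv.nonneg _) fun i _ => h _ _
    _ = (∏ i, a i) * ∏ j, b j := by rw [Finset.prod_mul_distrib, Equiv.prod_comp σ a]

lemma linearIndependent_row_of_abv_sub_diagonal_lt [Finite ι] [DecidableEq ι]
    (hna : IsNonarchimedean abv) {Z : Matrix ι ι K} {d : ι → K}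
    (h : ∀ i j, abv ((Z - diagonal d) i j) < abv (d j)) : LinearIndependent K Z.row := by
  have := Fintype.ofFinite ι
  rw [Fintype.linearIndependent_iff]
  intro c hc
  by_contra! hne
  obtain ⟨i₀, hi₀⟩ := hne
  have : Nonempty ι := ⟨i₀⟩
  obtain ⟨r, hr⟩ := Finite.exists_max fun i => abv (c i)
  have hcr : 0 < abv (c r) := (abv.pos hi₀).trans_le (hr i₀)
  have hdr : 0 < abv (d r) := (abv.nonneg _).trans_lt (h r r)
  have hcol : ∑ i, c i * Z i r = 0 := by simpa using congrFun hc r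
  have hdiag : c r * d r = -∑ i, c i * (Z - diagonal d) i r := by
    simp [mul_sub, hcol, diagonal_apply]
  have hlt : abv (c r * d r) < abv (c r) * abv (d r) := by
    rw [hdiag, abv.map_neg]
    refine abv_sum_lt hna (mul_pos hcr hdr) fun i _ => ?_
    rw [abv.map_mul]
    exact mul_lt_mul' (hr i) (h i r) (abv.nonneg _) hcr
  exact hlt.ne (abv.map_mul _ _)

lemma exists_linearIndependent_abv_vecMul_le [Fintype ι] (hna : IsNonarchimedean abv) {S : Set K}
    {P : Matrix ι ι K} {d : ι → K}
    (h : ∀ ζ : ι → K, ∃ z : ι → K, (∀ c, z c ∈ S) ∧ ∀ c, abv ((z ᵥ* P - ζ) c) < abv (d c)) :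
    ∃ u : ι → ι → K, (∀ r c, u r c ∈ S) ∧ LinearIndependent K u ∧
      ∀ r c, abv ((u r ᵥ* P) c) ≤ abv (d c) := by
  classical
  choose u huS hu using fun r => h (diagonal d r)
  refine ⟨u, huS, ?_, fun r c => ?_⟩
  · have hrows : LinearIndependent K (of u * P).row :=
      linearIndependent_row_of_abv_sub_diagonal_lt hna hu
    exact hrows.of_comp P.vecMulLinear
  · have hdiag : abv (diagonal d r c) ≤ abv (d c) := by
      by_cases hrc : r = c
      · simp [hrc]
      · simp [diagonal_apply_ne d hrc]
    calc abv ((u r ᵥ* P) c) = abv ((u r ᵥ* P - diagonal d r) c + diagonal d r c) := by simp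
      _ ≤ abv (d c) := (hna _ _).trans (max_le (hu r c).le hdiag)

lemma one_le_abv_det_of_mem_subring [Fintype ι] [DecidableEq ι] {S : Subring K}
    (hS : ∀ x ∈ S, x ≠ 0 → 1 ≤ abv x) {Z : Matrix ι ι K} (hZS : ∀ i j, Z i j ∈ S)
    (hZ : LinearIndependent K Z.row) : 1 ≤ abv Z.det := by
  refine hS _ ?_ ((isUnit_iff_isUnit_det _).1 (linearIndependent_rows_iff_isUnit.1 hZ)).ne_zero
  rw [det_apply]
  exact S.sum_mem fun σ _ => S.zsmul_mem (S.prod_mem fun i _ => hZS _ _) _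

lemma abv_det_le_pow_mul_prod [Fintype ι] [DecidableEq ι] [Fintype κ] (hna : IsNonarchimedean abv)
    {S : Subring K} (hS : ∀ x ∈ S, x ≠ 0 → 1 ≤ abv x) {P : Matrix ι ι K} {M : ℝ} {W : ι → ℝ}
    {v : κ → ι → K} (hvS : ∀ r c, v r c ∈ S) (hv : LinearIndependent K v)
    (hvW : ∀ r c, abv ((v r ᵥ* P) c) ≤ W c)
    {u : ι → ι → K} (huS : ∀ r c, u r c ∈ S) (hu : LinearIndependent K u)
    (huW : ∀ r c, abv ((u r ᵥ* P) c) ≤ M * W c) :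
    abv P.det ≤ M ^ (Fintype.card ι - Fintype.card κ) * ∏ c, W c := by
  have hspan : Submodule.span K (Set.range u) = ⊤ := by
    by_cases h : Nonempty ι
    · exact hu.span_eq_top_of_card_eq_finrank (finrank_fintype_fun_eq_card K).symm
    · rw [not_nonempty_iff] at h
      exact Subsingleton.elim _ _
  obtain ⟨j, hj⟩ := exists_linearIndependent_sumElim_of_span_eq_top hv hspan
  have hcard : Fintype.card ι =
      Fintype.card (κ ⊕ Fin (finrank K (ι → K) - Fintype.card κ)) := by
    have := hv.fintype_card_le_finrank
    rw [finrank_fintype_fun_eq_card] at this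
    rw [Fintype.card_sum, Fintype.card_fin, finrank_fintype_fun_eq_card]
    lia
  let e := Fintype.equivOfCardEq hcard
  let Z : Matrix ι ι K := of fun i => Sum.elim v (u ∘ j) (e i)
  have hZS : ∀ i c, Z i c ∈ S := fun i c => by
    change Sum.elim v (u ∘ j) (e i) c ∈ S
    rcases e i with r | r
    exacts [hvS r c, huS (j r) c]
  have hrows : ∀ i c, abv ((Z * P) i c) ≤ Sum.elim (fun _ => 1) (fun _ => M) (e i) * W c := by
    intro i c
    change abv ((Sum.elim v (u ∘ j) (e i) ᵥ* P) c) ≤ _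
    rcases e i with r | r
    · simpa using hvW r c
    · exact huW (j r) c
  calc abv P.det ≤ abv Z.det * abv P.det :=
        le_mul_of_one_le_left (abv.nonneg _)
          (one_le_abv_det_of_mem_subring hS hZS (hj.comp e e.injective))
    _ = abv (Z * P).det := by rw [det_mul, abv.map_mul]
    _ ≤ (∏ i, Sum.elim (fun _ => 1) (fun _ => M) (e i)) * ∏ c, W c :=
        abv_det_le_prod_mul_prod hna hrows
    _ = M ^ (Fintype.card ι - Fintype.card κ) * ∏ c, W c := by
        rw [e.prod_comp]
        simp

end Nonarchimedean

section LNorm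

lemma one_lt_card : (1 : ℝ) < Fintype.card 𝔽 := mod_cast Fintype.one_lt_card

lemma card_pos : (0 : ℝ) < Fintype.card 𝔽 := zero_lt_one.trans one_lt_card

lemma lnorm_of_ne_zero {x : L 𝔽} (hx : x ≠ 0) : lnorm x = (Fintype.card 𝔽 : ℝ) ^ (-x.order) :=
  if_neg hx

lemma lnorm_zero : lnorm (0 : L 𝔽) = 0 := if_pos rfl

lemma lnorm_pos {x : L 𝔽} (hx : x ≠ 0) : 0 < lnorm x := by
  rw [lnorm_of_ne_zero hx]
  exact zpow_pos card_pos _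

lemma lnorm_nonneg (x : L 𝔽) : 0 ≤ lnorm x := by
  by_cases hx : x = 0
  · rw [hx, lnorm_zero]
  · exact (lnorm_pos hx).le

lemma lnorm_mul (x y : L 𝔽) : lnorm (x * y) = lnorm x * lnorm y := by
  by_cases hx : x = 0
  · simp [hx, lnorm_zero]
  by_cases hy : y = 0
  · simp [hy, lnorm_zero]
  rw [lnorm_of_ne_zero hx, lnorm_of_ne_zero hy, lnorm_of_ne_zero (mul_ne_zero hx hy),
    HahnSeries.order_mul hx hy, neg_add, zpow_add₀ card_pos.ne']

lemma lnorm_lt_zpow_iff {x : L 𝔽} {j : ℤ} :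
    lnorm x < (Fintype.card 𝔽 : ℝ) ^ j ↔ ∀ i ≤ -j, x.coeff i = 0 := by
  by_cases hx : x = 0
  · simp [hx, lnorm_zero, zpow_pos card_pos]
  rw [lnorm_of_ne_zero hx, zpow_lt_zpow_iff_right₀ one_lt_card]
  constructor
  · intro h i hi
    exact HahnSeries.coeff_eq_zero_of_lt_order (by lia)
  · intro h
    by_contra! hj
    exact hx (HahnSeries.coeff_order_eq_zero.1 (h _ (by lia)))

lemma lnorm_le_zpow_of_lt_zpow_add_one {x : L 𝔽} {j : ℤ}
    (h : lnorm x < (Fintype.card 𝔽 : ℝ) ^ (j + 1)) : lnorm x ≤ (Fintype.card 𝔽 : ℝ) ^ j := by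
  by_cases hx : x = 0
  · rw [hx, lnorm_zero]
    exact (zpow_pos card_pos _).le
  · rw [lnorm_of_ne_zero hx, zpow_lt_zpow_iff_right₀ one_lt_card, Int.lt_add_one_iff] at h
    rw [lnorm_of_ne_zero hx]
    exact zpow_le_zpow_right₀ one_lt_card.le h

lemma lnorm_add_le_max (x y : L 𝔽) : lnorm (x + y) ≤ max (lnorm x) (lnorm y) := by
  by_contra! h
  have hxy : x + y ≠ 0 := by
    intro h0
    rw [h0, lnorm_zero] at h
    exact h.not_ge (le_max_of_le_left (lnorm_nonneg x))
  have heq := lnorm_of_ne_zero hxy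
  obtain ⟨hx, hy⟩ := max_lt_iff.1 (heq ▸ h)
  rw [lnorm_lt_zpow_iff] at hx hy
  refine (lnorm_lt_zpow_iff.2 fun i hi => ?_).ne heq
  rw [HahnSeries.coeff_add, hx i hi, hy i hi, add_zero]

/-- The norm of `ℒ`, bundled as an absolute value. -/
def lnormAbv : AbsoluteValue (L 𝔽) ℝ where
  toFun := lnorm
  map_mul' := lnorm_mul
  nonneg' := lnorm_nonneg
  eq_zero' _ := ⟨fun h => by_contra fun hx => (lnorm_pos hx).ne' h, fun h => h ▸ lnorm_zero⟩
  add_le' x y := (lnorm_add_le_max x y).trans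
    (max_le_add_of_nonneg (lnorm_nonneg x) (lnorm_nonneg y))

lemma isNonarchimedean_lnormAbv : IsNonarchimedean (lnormAbv (𝔽 := 𝔽)) := lnorm_add_le_max

lemma lnorm_sub_le_max (x y : L 𝔽) : lnorm (x - y) ≤ max (lnorm x) (lnorm y) := by
  simpa only [sub_eq_add_neg, show lnorm (-y) = lnorm y from lnormAbv.map_neg y] using
    lnorm_add_le_max x (-y)

lemma lnorm_single {a : 𝔽} (ha : a ≠ 0) (j : ℤ) :
    lnorm (HahnSeries.single j a : L 𝔽) = (Fintype.card 𝔽 : ℝ) ^ (-j) := by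
  rw [lnorm_of_ne_zero (HahnSeries.single_ne_zero ha), HahnSeries.order_single ha]

end LNorm

section Polynomials

variable {F : Type} [Field F]

/-- The polynomial ring `𝔽[X]` as a subring of `ℒ`. -/
def polySubring (F : Type) [Field F] : Subring (L F) where
  carrier := {x | IsPoly x}
  zero_mem' i _ := rfl
  one_mem' i hi := by rw [HahnSeries.coeff_one, if_neg hi.ne']
  add_mem' hx hy i hi := by rw [HahnSeries.coeff_add, hx i hi, hy i hi, add_zero]
  neg_mem' hx i hi := by rw [HahnSeries.coeff_neg, hx i hi, neg_zero]
  mul_mem' {x y} hx hy i hi := by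
    rw [HahnSeries.coeff_mul]
    refine Finset.sum_eq_zero fun p hp => ?_
    have hp : p.1 + p.2 = i := (Finset.mem_antidiagonal.1 hp).2.2
    obtain h | h : 0 < p.1 ∨ 0 < p.2 := by lia
    · rw [hx _ h, zero_mul]
    · rw [hy _ h, mul_zero]

lemma one_le_lnorm_of_isPoly {x : L 𝔽} (hx : IsPoly x) (hx0 : x ≠ 0) : 1 ≤ lnorm x := by
  by_contra! h
  rw [← zpow_zero (Fintype.card 𝔽 : ℝ), lnorm_lt_zpow_iff] at h
  refine hx0 (HahnSeries.ext (funext fun i => ?_))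
  obtain hi | hi := lt_or_ge 0 i
  exacts [hx i hi, h i (by lia)]

lemma exists_isPoly_lnorm_sub_lt {x : L 𝔽} {t : ℕ} (h : ∀ j : Fin t, x.coeff (j + 1) = 0) :
    ∃ y, IsPoly y ∧ lnorm (x - y) < (Fintype.card 𝔽 : ℝ) ^ (-(t : ℤ)) := by
  refine ⟨HahnSeries.truncLT 1 x, fun i hi => ?_, lnorm_lt_zpow_iff.2 fun i hi => ?_⟩
  · exact HahnSeries.coeff_truncLT_of_le (by lia) x
  · rw [HahnSeries.coeff_sub]
    obtain hi' | hi' := lt_or_ge i 1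
    · rw [HahnSeries.coeff_truncLT_of_lt hi', sub_self]
    · rw [HahnSeries.coeff_truncLT_of_le hi', sub_zero]
      obtain ⟨j, rfl⟩ : ∃ j : ℕ, i = j + 1 := ⟨(i - 1).toNat, by lia⟩
      exact h ⟨j, by lia⟩

/-- The polynomial `w 0 + w 1 X + ⋯ + w (t - 1) X ^ (t - 1)`; recall that `X` is
`HahnSeries.single (-1) 1`. -/
def polyOfCoeffs {t : ℕ} (w : Fin t → F) : L F := ∑ j : Fin t, HahnSeries.single (-(j : ℤ)) (w j)

lemma coeff_polyOfCoeffs_mul {t : ℕ} (w : Fin t → F) (x : L F) (i : ℤ) :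
    (polyOfCoeffs w * x).coeff i = ∑ j, w j * x.coeff (i + j) := by
  rw [polyOfCoeffs, Finset.sum_mul, HahnSeries.coeff_sum]
  refine Finset.sum_congr rfl fun j _ => ?_
  rw [HahnSeries.coeff_single_mul, sub_neg_eq_add]

lemma coeff_polyOfCoeffs {t : ℕ} (w : Fin t → F) (i : ℤ) :
    (polyOfCoeffs w).coeff i = ∑ j : Fin t, if i + j = 0 then w j else 0 := by
  simpa [HahnSeries.coeff_one] using coeff_polyOfCoeffs_mul w 1 i

lemma isPoly_polyOfCoeffs {t : ℕ} (w : Fin t → F) : IsPoly (polyOfCoeffs w) := by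
  intro i hi
  rw [coeff_polyOfCoeffs]
  exact Finset.sum_eq_zero fun j _ => if_neg (by lia)

lemma polyOfCoeffs_ne_zero {t : ℕ} {w : Fin t → F} (hw : w ≠ 0) : polyOfCoeffs w ≠ 0 := by
  obtain ⟨j, hj⟩ := Function.ne_iff.1 hw
  refine HahnSeries.ne_zero_of_coeff_ne_zero (g := -(j : ℤ)) ?_
  simpa [coeff_polyOfCoeffs, neg_add_eq_zero, Fin.val_inj] using hj

lemma lnorm_polyOfCoeffs_lt {t : ℕ} (w : Fin t → 𝔽) :
    lnorm (polyOfCoeffs w) < (Fintype.card 𝔽 : ℝ) ^ t := by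
  rw [← zpow_natCast, lnorm_lt_zpow_iff]
  intro i hi
  rw [coeff_polyOfCoeffs]
  exact Finset.sum_eq_zero fun j _ => if_neg (by have := j.isLt; lia)

end Polynomials

section Hankel

open Matrix

variable {F : Type} [Field F] {ι κ : Type*} {m n s t : ℕ}

lemma mulVec_surjective_of_vecMul_injective {K : Type*} [Field K] [Fintype ι] [Fintype κ]
    {H : Matrix ι κ K} (h : Function.Injective fun w => w ᵥ* H) :
    Function.Surjective H.mulVec := by
  have hrank : H.rank = Fintype.card ι := (vecMul_injective_iff.1 h).rank_matrix
  have hrange : LinearMap.range H.mulVecLin = ⊤ :=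
    Submodule.eq_top_of_finrank_eq (hrank.trans (Module.finrank_fintype_fun_eq_card K).symm)
  exact LinearMap.range_eq_top.1 hrange

/-- The block Hankel matrix of `A`, the matrix over `𝔽` of the map taking the coefficients of a
vector `x` of polynomials of degree `< s` to the coefficients of `X⁻¹, …, X⁻ᵗ` in `A x`. -/
def hankel (A : Matrix ι κ (L F)) (s t : ℕ) : Matrix (ι × Fin t) (κ × Fin s) F :=
  of fun p q => (A p.1 q.1).coeff (p.2 + q.2 + 1)

lemma hankel_transpose (A : Matrix ι κ (L F)) (s t : ℕ) : hankel Aᵀ t s = (hankel A s t)ᵀ := by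
  ext p q
  simp only [hankel, of_apply, transpose_apply, add_comm (p.2 : ℤ)]

/-- The vector of polynomials of degree `< t` with coefficients `w`. -/
def polyVec (w : ι × Fin t → F) : ι → L F := fun l => polyOfCoeffs fun j => w (l, j)

lemma coeff_polyVec_vecMul [Fintype ι] (A : Matrix ι κ (L F)) (w : ι × Fin t → F) (c : κ)
    (j : Fin s) : ((polyVec w ᵥ* A) c).coeff (j + 1) = (w ᵥ* hankel A s t) (c, j) := by
  simp only [vecMul, dotProduct, HahnSeries.coeff_sum, polyVec, coeff_polyOfCoeffs_mul,
    Fintype.sum_prod_type, hankel, of_apply]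
  simp only [add_assoc, add_comm, add_left_comm]

lemma coeff_mulVec_polyVec [Fintype κ] (A : Matrix ι κ (L F)) (w : κ × Fin s → F) (r : ι)
    (j : Fin t) : ((A *ᵥ polyVec w) r).coeff (j + 1) = (hankel A s t *ᵥ w) (r, j) := by
  rw [← vecMul_transpose, coeff_polyVec_vecMul, hankel_transpose, vecMul_transpose]

lemma vecMul_Abar_inl (A : Mat F m n) (q : Fin m ⊕ Fin n → L F) (l' : Fin n) :
    (q ᵥ* Abar A) (Sum.inl l') = ((q ∘ Sum.inl) ᵥ* A) l' + q (Sum.inr l') := by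
  simp [Abar, vecMul_fromBlocks]

lemma vecMul_AbarStar_inl (A : Mat F m n) (z : Fin n ⊕ Fin m → L F) (l : Fin m) :
    (z ᵥ* AbarStar A) (Sum.inl l) = (A *ᵥ (z ∘ Sum.inl)) l + z (Sum.inr l) := by
  simp [AbarStar, vecMul_fromBlocks, vecMul_transpose]

/-- `q` is a polynomial solution, with nonzero `(q_1, …, q_m)`, of the system `‖q_l‖ < a`,
`‖q · C_{l'}(Ā)‖ < b`. -/
structure IsPrimalSolution (A : Mat 𝔽 m n) (a b : ℝ) (q : Fin m ⊕ Fin n → L 𝔽) : Prop where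
  isPoly : ∀ c, IsPoly (q c)
  exists_ne_zero : ∃ l, q (Sum.inl l) ≠ 0
  lnorm_lt : ∀ l, lnorm (q (Sum.inl l)) < a
  lnorm_vecMul_lt : ∀ l', lnorm ((q ᵥ* Abar A) (Sum.inl l')) < b

lemma exists_isPrimalSolution_of_vecMul_hankel_eq_zero {A : Mat 𝔽 m n} {w : Fin m × Fin t → 𝔽}
    (hw0 : w ≠ 0) (hw : w ᵥ* hankel A s t = 0) :
    ∃ q, IsPrimalSolution A ((Fintype.card 𝔽 : ℝ) ^ t) ((Fintype.card 𝔽 : ℝ) ^ (-(s : ℤ))) q := by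
  have hcoeff (l' : Fin n) (j : Fin s) : ((polyVec w ᵥ* A) l').coeff (j + 1) = 0 := by
    rw [coeff_polyVec_vecMul, hw, Pi.zero_apply]
  choose y hy hlt using fun l' => exists_isPoly_lnorm_sub_lt (hcoeff l')
  obtain ⟨⟨l, j⟩, hlj⟩ := Function.ne_iff.1 hw0
  refine ⟨Sum.elim (polyVec w) (-y), ?_, ⟨l, ?_⟩, fun l => lnorm_polyOfCoeffs_lt _, fun l' => ?_⟩
  · rintro (l | l')
    exacts [isPoly_polyOfCoeffs _, (polySubring 𝔽).neg_mem (hy l')]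
  · exact polyOfCoeffs_ne_zero (Function.ne_iff.2 ⟨j, hlj⟩)
  · simpa [vecMul_Abar_inl, ← sub_eq_add_neg] using hlt l'

/-- The `m + n` forms `(x, A x + y)` in `(x, y)`, that is, `Ā^*` with its two blocks of columns
swapped so that rows and columns have the same index set. -/
def dualForms (A : Mat F m n) : Matrix (Fin n ⊕ Fin m) (Fin n ⊕ Fin m) (L F) :=
  (AbarStar A).submatrix id Sum.swap

lemma det_dualForms (A : Mat F m n) : (dualForms A).det = 1 := by
  rw [dualForms, AbarStar, fromBlocks_submatrix_sum_swap_right]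
  simp

lemma vecMul_dualForms_inl (A : Mat F m n) (z : Fin n ⊕ Fin m → L F) (l' : Fin n) :
    (z ᵥ* dualForms A) (Sum.inl l') = z (Sum.inl l') := by
  change (z ᵥ* AbarStar A) (Sum.inr l') = _
  simp [AbarStar, vecMul_fromBlocks]

lemma vecMul_dualForms_inr (A : Mat F m n) (z : Fin n ⊕ Fin m → L F) (l : Fin m) :
    (z ᵥ* dualForms A) (Sum.inr l) = (z ᵥ* AbarStar A) (Sum.inl l) :=
  rfl

lemma exists_isPoly_lnorm_vecMul_dualForms_sub_lt {A : Mat 𝔽 m n}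
    (h : Function.Surjective (hankel A s t).mulVec) (ζ : Fin n ⊕ Fin m → L 𝔽) :
    ∃ z : Fin n ⊕ Fin m → L 𝔽, (∀ c, IsPoly (z c)) ∧
      (∀ l', lnorm ((z ᵥ* dualForms A - ζ) (Sum.inl l')) < (Fintype.card 𝔽 : ℝ) ^ s) ∧
      ∀ l, lnorm ((z ᵥ* dualForms A - ζ) (Sum.inr l)) < (Fintype.card 𝔽 : ℝ) ^ (-(t : ℤ)) := by
  choose p hp hζp using fun l' =>
    exists_isPoly_lnorm_sub_lt (x := ζ (Sum.inl l')) (t := 0) fun j => j.elim0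
  obtain ⟨w, hw⟩ := h fun r => (ζ (Sum.inr r.1) - (A *ᵥ p) r.1).coeff (r.2 + 1)
  have hcoeff (l : Fin m) (j : Fin t) :
      (ζ (Sum.inr l) - (A *ᵥ p) l - (A *ᵥ polyVec w) l).coeff (j + 1) = 0 := by
    rw [HahnSeries.coeff_sub, coeff_mulVec_polyVec, hw, sub_self]
  choose y hy hlt using fun l => exists_isPoly_lnorm_sub_lt (hcoeff l)
  refine ⟨Sum.elim (p + polyVec w) y, ?_, fun l' => ?_, fun l => ?_⟩
  · rintro (l' | l)
    exacts [(polySubring 𝔽).add_mem (hp l') (isPoly_polyOfCoeffs _), hy l]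
  · have hrw : (Sum.elim (p + polyVec w) y ᵥ* dualForms A - ζ) (Sum.inl l') =
        polyVec w l' - (ζ (Sum.inl l') - p l') := by
      rw [Pi.sub_apply, vecMul_dualForms_inl, Sum.elim_inl, Pi.add_apply]
      ring
    rw [hrw]
    refine (lnorm_sub_le_max _ _).trans_lt (max_lt (lnorm_polyOfCoeffs_lt _) ?_)
    exact (hζp l').trans_le (by simpa using one_le_pow₀ one_lt_card.le)
  · have hrw : (Sum.elim (p + polyVec w) y ᵥ* dualForms A - ζ) (Sum.inr l) =
        -(ζ (Sum.inr l) - (A *ᵥ p) l - (A *ᵥ polyVec w) l - y l) := by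
      rw [Pi.sub_apply, vecMul_dualForms_inr, vecMul_AbarStar_inl, Sum.elim_comp_inl, mulVec_add,
        Sum.elim_inr, Pi.add_apply]
      ring
    rw [hrw]
    exact (lnormAbv.map_neg _).trans_lt (hlt l)

end Hankel

section Transference

open scoped Matrix

variable {m n : ℕ} {A A₀ : Mat 𝔽 m n} {κ : Type*} [Fintype κ]

lemma IsPrimalSolution.pos_of_zpow {t : ℕ} {b : ℝ} {q : Fin m ⊕ Fin n → L 𝔽}
    (hq : IsPrimalSolution A ((Fintype.card 𝔽 : ℝ) ^ t) b q) : 0 < t := by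
  obtain ⟨l, hl⟩ := hq.exists_ne_zero
  have h : (1 : ℝ) < (Fintype.card 𝔽 : ℝ) ^ t :=
    (one_le_lnorm_of_isPoly (hq.isPoly _) hl).trans_lt (hq.lnorm_lt l)
  exact Nat.pos_of_ne_zero fun ht => by simp [ht] at h

lemma exists_isPrimalSolution_or_linearIndependent_zpow (A : Mat 𝔽 m n) (s t : ℕ) :
    (∃ q, IsPrimalSolution A ((Fintype.card 𝔽 : ℝ) ^ t) ((Fintype.card 𝔽 : ℝ) ^ (-(s : ℤ))) q) ∨
      ∃ u : Fin n ⊕ Fin m → Fin n ⊕ Fin m → L 𝔽, (∀ r c, IsPoly (u r c)) ∧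
        LinearIndependent (L 𝔽) u ∧
        (∀ r l', lnorm ((u r ᵥ* dualForms A) (Sum.inl l')) ≤ (Fintype.card 𝔽 : ℝ) ^ s) ∧
        ∀ r l, lnorm ((u r ᵥ* dualForms A) (Sum.inr l)) ≤ (Fintype.card 𝔽 : ℝ) ^ (-(t : ℤ)) := by
  by_cases hker : ∀ w : Fin m × Fin t → 𝔽, w ᵥ* hankel A s t = 0 → w = 0
  · have hinj : Function.Injective fun w => w ᵥ* hankel A s t :=
      (injective_iff_map_eq_zero (hankel A s t).vecMulLinear).2 hker
    have happrox := exists_isPoly_lnorm_vecMul_dualForms_sub_lt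
      (mulVec_surjective_of_vecMul_injective hinj)
    let d : Fin n ⊕ Fin m → L 𝔽 :=
      Sum.elim (fun _ => HahnSeries.single (-(s : ℤ)) 1) fun _ => HahnSeries.single (t : ℤ) 1
    obtain ⟨u, hup, hu, hud⟩ := exists_linearIndependent_abv_vecMul_le
      isNonarchimedean_lnormAbv (S := {x | IsPoly x}) (P := dualForms A) (d := d) fun ζ => by
        obtain ⟨z, hz, hinl, hinr⟩ := happrox ζ
        refine ⟨z, hz, ?_⟩
        rintro (l' | l)
        · exact (hinl l').trans_eq (by simp [d, lnormAbv, lnorm_single])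
        · exact (hinr l).trans_eq (by simp [d, lnormAbv, lnorm_single])
    refine .inr ⟨u, hup, hu, fun r l' => ?_, fun r l => ?_⟩
    · exact (hud r (Sum.inl l')).trans_eq (by simp [d, lnormAbv, lnorm_single])
    · exact (hud r (Sum.inr l)).trans_eq (by simp [d, lnormAbv, lnorm_single])
  · push Not at hker
    obtain ⟨w, hw, hw0⟩ := hker
    exact .inl (exists_isPrimalSolution_of_vecMul_hankel_eq_zero hw0 hw)

lemma IsPrimalSolution.of_zpow {s t : ℕ} {α β : ℝ} {q : Fin m ⊕ Fin n → L 𝔽}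
    (hq : IsPrimalSolution A ((Fintype.card 𝔽 : ℝ) ^ t) ((Fintype.card 𝔽 : ℝ) ^ (-(s : ℤ))) q)
    (hα : 0 < α) (hα' : α < (Fintype.card 𝔽 : ℝ) ^ (s + 1)) (hβ : 0 < β)
    (hβ' : 0 < t → β < (Fintype.card 𝔽 : ℝ) ^ (1 - (t : ℤ))) :
    IsPrimalSolution A β⁻¹ α⁻¹ q where
  isPoly := hq.isPoly
  exists_ne_zero := hq.exists_ne_zero
  lnorm_lt l := by
    have hle : lnorm (q (Sum.inl l)) ≤ (Fintype.card 𝔽 : ℝ) ^ (-(1 - (t : ℤ))) :=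
      lnorm_le_zpow_of_lt_zpow_add_one ((hq.lnorm_lt l).trans_eq (by simp))
    refine hle.trans_lt ?_
    rw [zpow_neg]
    exact inv_strictAnti₀ hβ (hβ' hq.pos_of_zpow)
  lnorm_vecMul_lt l' := by
    have hle : lnorm ((q ᵥ* Abar A) (Sum.inl l')) ≤
        (Fintype.card 𝔽 : ℝ) ^ (-((s + 1 : ℕ) : ℤ)) :=
      lnorm_le_zpow_of_lt_zpow_add_one ((hq.lnorm_vecMul_lt l').trans_eq (by congr 1; lia))
    refine hle.trans_lt ?_
    rw [zpow_neg, zpow_natCast]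
    exact inv_strictAnti₀ hα hα'

lemma IsPrimalSolution.mono {a a' b b' : ℝ} {q : Fin m ⊕ Fin n → L 𝔽}
    (hq : IsPrimalSolution A a b q) (ha : a ≤ a') (hb : b ≤ b') : IsPrimalSolution A a' b' q :=
  ⟨hq.isPoly, hq.exists_ne_zero, fun l => (hq.lnorm_lt l).trans_le ha,
    fun l' => (hq.lnorm_vecMul_lt l').trans_le hb⟩

lemma exists_isPrimalSolution_or_linearIndependent (A : Mat 𝔽 m n) {α β : ℝ} (hα : 1 ≤ α)
    (hβ : 0 < β) :
    (∃ q, IsPrimalSolution A β⁻¹ α⁻¹ q) ∨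
      ∃ u : Fin n ⊕ Fin m → Fin n ⊕ Fin m → L 𝔽, (∀ r c, IsPoly (u r c)) ∧
        LinearIndependent (L 𝔽) u ∧
        (∀ r l', lnorm ((u r ᵥ* dualForms A) (Sum.inl l')) ≤ α) ∧
        ∀ r l, lnorm ((u r ᵥ* dualForms A) (Sum.inr l)) ≤ β := by
  obtain ⟨s, hs, hs'⟩ := exists_nat_pow_near hα (one_lt_card (𝔽 := 𝔽))
  obtain ⟨j, hj, hj'⟩ := exists_mem_Ico_zpow hβ (one_lt_card (𝔽 := 𝔽))
  have hkj : (Fintype.card 𝔽 : ℝ) ^ (-((-j).toNat : ℤ)) ≤ (Fintype.card 𝔽 : ℝ) ^ j :=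
    zpow_le_zpow_right₀ one_lt_card.le (by lia)
  obtain ⟨q, hq⟩ | ⟨u, hup, hu, hinl, hinr⟩ :=
    exists_isPrimalSolution_or_linearIndependent_zpow A s (-j).toNat
  · refine .inl ⟨q, hq.of_zpow (zero_lt_one.trans_le hα) hs' hβ fun ht => hj'.trans_eq ?_⟩
    congr 1
    lia
  · exact .inr ⟨u, hup, hu, fun r l' => (hinl r l').trans hs,
      fun r l => (hinr r l).trans (hkj.trans hj)⟩

lemma exists_isPrimalSolution_of_linearIndependent {X Y M : ℝ} (hMX : 1 ≤ M * X) (hMY : 0 < M * Y)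
    {v : κ → Fin n ⊕ Fin m → L 𝔽} (hv : LinearIndependent (L 𝔽) v) (hvp : ∀ r c, IsPoly (v r c))
    (hX : ∀ r l', lnorm (v r (Sum.inl l')) ≤ X)
    (hY : ∀ r l, lnorm ((v r ᵥ* AbarStar A) (Sum.inl l)) ≤ Y)
    (hlt : M ^ (n + m - Fintype.card κ) * (X ^ n * Y ^ m) < 1) :
    ∃ q, IsPrimalSolution A (M * Y)⁻¹ (M * X)⁻¹ q := by
  refine (exists_isPrimalSolution_or_linearIndependent A hMX hMY).resolve_right ?_
  rintro ⟨u, hup, hu, hinl, hinr⟩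
  have hdet := abv_det_le_pow_mul_prod (S := polySubring 𝔽) (P := dualForms A) (M := M)
    (u := u) (W := Sum.elim (fun _ => X) fun _ => Y) isNonarchimedean_lnormAbv
    (fun x hx => one_le_lnorm_of_isPoly hx) hvp hv ?_ hup hu ?_
  · rw [det_dualForms, map_one] at hdet
    exact hlt.not_ge (by simpa using hdet)
  · rintro r (l' | l)
    · exact (congrArg lnorm (vecMul_dualForms_inl A (v r) l')).trans_le (hX r l')
    · exact hY r l
  · rintro r (l' | l)
    exacts [hinl r l', hinr r l]

lemma lnorm_le_mnorm (A : Mat 𝔽 m n) (l : Fin m) (l' : Fin n) : lnorm (A l l') ≤ mnorm A :=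
  le_ciSup (f := fun p : Fin m × Fin n => lnorm (A p.1 p.2)) (Set.finite_range _).bddAbove (l, l')

lemma mem_mball_self {ρ : ℝ} (h : A ∈ mball A₀ ρ) : A₀ ∈ mball A₀ ρ := by
  have hρ : 0 ≤ ρ := (Real.iSup_nonneg fun _ => lnorm_nonneg _).trans h
  simpa [mball, mnorm, lnorm_zero] using hρ

lemma lnorm_vecMul_AbarStar_le_of_mem_mball {ρ X Y : ℝ} (hA : A ∈ mball A₀ ρ) (hρ : ρ * X ≤ Y)
    {z : Fin n ⊕ Fin m → L 𝔽} (hX : ∀ l', lnorm (z (Sum.inl l')) ≤ X) {l : Fin m}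
    (hY : lnorm ((z ᵥ* AbarStar A) (Sum.inl l)) ≤ Y) :
    lnorm ((z ᵥ* AbarStar A₀) (Sum.inl l)) ≤ Y := by
  have hsub : (z ᵥ* AbarStar A₀) (Sum.inl l) =
      (z ᵥ* AbarStar A) (Sum.inl l) - ((A - A₀) *ᵥ (z ∘ Sum.inl)) l := by
    simp only [vecMul_AbarStar_inl, Matrix.sub_mulVec, Pi.sub_apply]
    ring
  rw [hsub]
  refine (lnorm_sub_le_max _ _).trans (max_le hY ?_)
  change lnormAbv (∑ l', (A - A₀) l l' * z (Sum.inl l')) ≤ Y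
  refine abv_sum_le isNonarchimedean_lnormAbv ((lnorm_nonneg _).trans hY) fun l' _ => ?_
  have hle : lnorm ((A - A₀) l l') ≤ ρ := (lnorm_le_mnorm _ l l').trans hA
  calc lnorm ((A - A₀) l l' * z (Sum.inl l'))
      = lnorm ((A - A₀) l l') * lnorm (z (Sum.inl l')) := lnorm_mul _ _
    _ ≤ ρ * X := mul_le_mul hle (hX l') (lnorm_nonneg _) ((lnorm_nonneg _).trans hle)
    _ ≤ Y := hρ

end Transference

section Scales

variable {m n : ℕ} {R i : ℝ}

lemma tau_nonneg (m n : ℕ) : 0 ≤ tau m n := by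
  unfold tau
  positivity

lemma tau_le_one (m n : ℕ) : tau m n ≤ 1 :=
  div_le_one_of_le₀ (by linarith [n.cast_nonneg (α := ℝ)]) (by positivity)

lemma add_mul_tau (hn : 0 < n) : ((m : ℝ) + n) * tau m n = m := by
  unfold tau
  field_simp

lemma del_mul_rpow (hR : 0 < R) (x : ℝ) :
    del R m n * R ^ x = R ^ (x - m * ((m : ℝ) + n) ^ 2) := by
  rw [del, ← Real.rpow_add hR, neg_add_eq_sub]

lemma delStar_mul_rpow (hR : 0 < R) (x : ℝ) :
    delStar R m n * R ^ x = R ^ (x - n * ((m : ℝ) + n) ^ 2) := by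
  rw [delStar, ← Real.rpow_add hR, neg_add_eq_sub]

/-- The bound `δ* R^{m(1+i)}` for the first `n` coordinates of a dual solution. -/
def dualHeight (R : ℝ) (m n : ℕ) (i : ℝ) : ℝ := R ^ ((m : ℝ) * (1 + i) - n * ((m : ℝ) + n) ^ 2)

/-- The bound `δ* R^{-ni}` for the forms `q · C_l(Ā^*)` of a dual solution. It is weaker than the
one in the definition of a dual solution, and so survives moving `A` within the ball. -/
def dualWidth (R : ℝ) (m n : ℕ) (i : ℝ) : ℝ := R ^ (-(n : ℝ) * i - n * ((m : ℝ) + n) ^ 2)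

/-- The ratio of the size of a full basis of lattice points, given by duality, to the size
`(dualHeight, dualWidth)` of the dual solutions. It is nearly `(δ δ*)⁻¹ = R^{(m+n)³}`. -/
def gap (R : ℝ) (m n : ℕ) : ℝ := R ^ (((m : ℝ) + n) ^ 3 + n)

lemma gap_mul_dualHeight (hR : 0 < R) :
    gap R m n * dualHeight R m n i = R ^ (m * ((m : ℝ) + n) ^ 2 + n + m * (1 + i)) := by
  rw [gap, dualHeight, ← Real.rpow_add hR]
  ring_nf

lemma gap_mul_dualWidth (hR : 0 < R) :
    gap R m n * dualWidth R m n i = R ^ (m * ((m : ℝ) + n) ^ 2 + n - n * i) := by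
  rw [gap, dualWidth, ← Real.rpow_add hR]
  ring_nf

lemma delStar_mul_rpow_le_dualWidth (hR : 1 ≤ R) :
    delStar R m n * R ^ (-(n : ℝ) * (1 + i) - m) ≤ dualWidth R m n i := by
  rw [delStar_mul_rpow (by linarith), dualWidth]
  refine Real.rpow_le_rpow_of_exponent_le hR ?_
  linarith [m.cast_nonneg (α := ℝ), n.cast_nonneg (α := ℝ)]

lemma rpow_mul_dualHeight (hR : 0 < R) (hn : 0 < n) :
    R ^ (-((m : ℝ) + n) * (tau m n + i)) * dualHeight R m n i = dualWidth R m n i := by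
  rw [dualHeight, dualWidth, ← Real.rpow_add hR]
  congr 1
  linear_combination -add_mul_tau (m := m) hn

lemma one_le_gap_mul_dualHeight (hR : 1 ≤ R) (hi : 0 ≤ i) :
    1 ≤ gap R m n * dualHeight R m n i := by
  rw [gap_mul_dualHeight (by linarith)]
  exact Real.one_le_rpow hR (by positivity)

lemma inv_gap_mul_dualWidth_le (hR : 1 ≤ R) :
    (gap R m n * dualWidth R m n i)⁻¹ ≤ del R m n * R ^ ((n : ℝ) * (tau m n + i)) := by
  rw [gap_mul_dualWidth (by linarith), del_mul_rpow (by linarith), ← Real.rpow_neg (by linarith)]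
  refine Real.rpow_le_rpow_of_exponent_le hR ?_
  linarith [n.cast_nonneg (α := ℝ), mul_nonneg n.cast_nonneg (tau_nonneg m n)]

lemma inv_gap_mul_dualHeight_le (hR : 1 ≤ R) :
    (gap R m n * dualHeight R m n i)⁻¹ ≤ del R m n * R ^ (-(m : ℝ) * (tau m n + i) - n) := by
  rw [gap_mul_dualHeight (by linarith), del_mul_rpow (by linarith), ← Real.rpow_neg (by linarith)]
  refine Real.rpow_le_rpow_of_exponent_le hR ?_
  linarith [mul_le_of_le_one_right m.cast_nonneg (tau_le_one m n)]

lemma gap_pow_mul_lt_one (hR : 1 < R) (hn : 0 < n) :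
    gap R m n ^ (n - 1) * (dualHeight R m n i ^ n * dualWidth R m n i ^ m) < 1 := by
  have hR0 : 0 < R := by linarith
  have hn1 : (1 : ℝ) ≤ n := mod_cast hn
  rw [gap, dualHeight, dualWidth, ← Real.rpow_mul_natCast hR0.le, ← Real.rpow_mul_natCast hR0.le,
    ← Real.rpow_mul_natCast hR0.le, ← Real.rpow_add hR0, ← Real.rpow_add hR0]
  refine Real.rpow_lt_one_of_one_lt_of_neg hR ?_
  rw [Nat.cast_sub hn, Nat.cast_one]
  have hle : (n : ℝ) * (m + n) ≤ (m + n) ^ 3 :=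
    calc (n : ℝ) * (m + n) ≤ (m + n) * (m + n) :=
          mul_le_mul_of_nonneg_right (le_add_of_nonneg_left m.cast_nonneg) (by positivity)
      _ = (m + n) ^ 2 := (sq _).symm
      _ ≤ (m + n) ^ 3 :=
          pow_le_pow_right₀ (le_add_of_nonneg_of_le m.cast_nonneg hn1) (by norm_num)
  calc (((m : ℝ) + n) ^ 3 + n) * (n - 1) + ((m * (1 + i) - n * (m + n) ^ 2) * n +
        (-n * i - n * (m + n) ^ 2) * m) = n * (m + n) - (m + n) ^ 3 - n := by ring
    _ < 0 := by linarith

end Scales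

section Main

open scoped Matrix

variable {m n : ℕ} {R i : ℝ} {A₀ : Mat 𝔽 m n}

lemma iSup_lt_of_forall_lt {ι : Type*} [Finite ι] [Nonempty ι] {f : ι → ℝ} {a : ℝ}
    (h : ∀ i, f i < a) : ⨆ i, f i < a := by
  obtain ⟨i, hi⟩ := exists_eq_ciSup_of_finite (f := f)
  exact hi ▸ h i

lemma not_linearIndependent_of_forall_not_isPrimalSolution (hR : 1 < R) (hi : 0 ≤ i)
    (hA₀ : ∀ q, ¬ IsPrimalSolution A₀ (del R m n * R ^ ((n : ℝ) * (tau m n + i)))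
      (del R m n * R ^ (-(m : ℝ) * (tau m n + i) - n)) q)
    {v : Fin (m + 1) → Fin n ⊕ Fin m → L 𝔽} (hv : ∀ r c, IsPoly (v r c))
    (hX : ∀ r l', lnorm (v r (Sum.inl l')) ≤ dualHeight R m n i)
    (hY : ∀ r l, lnorm ((v r ᵥ* AbarStar A₀) (Sum.inl l)) ≤ dualWidth R m n i) :
    ¬ LinearIndependent (L 𝔽) v := by
  intro hli
  have hn : 0 < n := by
    have := hli.fintype_card_le_finrank
    simp only [Module.finrank_fintype_fun_eq_card, Fintype.card_sum, Fintype.card_fin] at this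
    lia
  have hR0 : 0 < R := zero_lt_one.trans hR
  have hMY : 0 < gap R m n * dualWidth R m n i :=
    mul_pos (Real.rpow_pos_of_pos hR0 _) (Real.rpow_pos_of_pos hR0 _)
  have hcard : n + m - Fintype.card (Fin (m + 1)) = n - 1 := by
    rw [Fintype.card_fin]
    lia
  obtain ⟨q, hq⟩ := exists_isPrimalSolution_of_linearIndependent
    (one_le_gap_mul_dualHeight hR.le hi) hMY hli hv hX hY (hcard ▸ gap_pow_mul_lt_one hR hn)
  exact hA₀ q (hq.mono (inv_gap_mul_dualWidth_le hR.le) (inv_gap_mul_dualHeight_le hR.le))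

end Main

theorem subspace_one_general {m n : ℕ} (hn : 0 < n) {R : ℝ} (hR : 1 < R) {i : ℝ}
    (hi : 0 ≤ i) {A₀ : Mat 𝔽 m n}
    (hA₀ : ¬ ∃ q : Fin m ⊕ Fin n → L 𝔽, (∀ t, IsPoly (q t)) ∧
      0 < (⨆ l : Fin m, lnorm (q (Sum.inl l))) ∧
      (⨆ l : Fin m, lnorm (q (Sum.inl l))) < del R m n * R ^ ((n : ℝ) * (tau m n + i)) ∧
      (⨆ l' : Fin n, lnorm (Matrix.vecMul q (Abar A₀) (Sum.inl l'))) <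
        del R m n * R ^ (-(m : ℝ) * (tau m n + i) - n))
    {v : Fin (m + 1) → (Fin n ⊕ Fin m → L 𝔽)} (hv : ∀ r t, IsPoly (v r t))
    (hvA : ∀ r, ∃ A ∈ mball A₀ (R ^ (-((m : ℝ) + n) * (tau m n + i))),
      (⨆ l' : Fin n, lnorm (v r (Sum.inl l'))) < delStar R m n * R ^ ((m : ℝ) * (1 + i)) ∧
      (⨆ l : Fin m, lnorm (Matrix.vecMul (v r) (AbarStar A) (Sum.inl l))) <
        delStar R m n * R ^ (-(n : ℝ) * (1 + i) - m)) :
    ¬ LinearIndependent (L 𝔽) v := by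
  have hR0 : 0 < R := zero_lt_one.trans hR
  have hX (r l') : lnorm (v r (Sum.inl l')) ≤ dualHeight R m n i := by
    obtain ⟨A, -, hX, -⟩ := hvA r
    rw [delStar_mul_rpow hR0] at hX
    exact (Finite.le_ciSup _ l').trans hX.le
  have hY (r l) : lnorm (Matrix.vecMul (v r) (AbarStar A₀) (Sum.inl l)) ≤ dualWidth R m n i := by
    obtain ⟨A, hA, -, hY⟩ := hvA r
    refine lnorm_vecMul_AbarStar_le_of_mem_mball hA (rpow_mul_dualHeight hR0 hn).le (hX r) ?_
    exact (Finite.le_ciSup _ l).trans (hY.le.trans (delStar_mul_rpow_le_dualWidth hR.le))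
  refine not_linearIndependent_of_forall_not_isPrimalSolution hR hi (fun q hq => ?_) hv hX hY
  obtain ⟨l, hl⟩ := hq.exists_ne_zero
  have : Nonempty (Fin m) := ⟨l⟩
  have : Nonempty (Fin n) := ⟨0, hn⟩
  have hpos := (lnorm_pos hl).trans_le (Finite.le_ciSup (fun l => lnorm (q (Sum.inl l))) l)
  exact hA₀ ⟨q, hq.isPoly, hpos, iSup_lt_of_forall_lt hq.lnorm_lt,
    iSup_lt_of_forall_lt hq.lnorm_vecMul_lt⟩

/-- **Theorem (Statement 5).** (Lemma `subspace1`.)  If on a small ball `B` the system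
(14)–(15) at level `i` has no polynomial solutions, then the set of `q ∈ 𝔽[X]^{m+n}`
solving (16)–(17) at level `j = i` for some `A ∈ B` contains at most `m` linearly
independent points. -/
theorem subspace_one (𝔽 : Type) [Field 𝔽] [Fintype 𝔽] (m n : ℕ)
    (hm : 0 < m) (hn : 0 < n) (σ : ℝ) (hσ : 0 < σ) :
    ∃ R₀ : ℝ, 1 ≤ R₀ ∧ ∀ R : ℝ, R₀ ≤ R →
      ∀ (i : ℕ) (c₀ : Mat 𝔽 m n) (ρ : ℝ),
        ρ < R ^ (-((m : ℝ) + n) * (tau m n + i)) →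
        (∀ A ∈ mball c₀ ρ, mnorm A ≤ σ) →
        (¬ ∃ (q : Fin m ⊕ Fin n → L 𝔽) (A : Mat 𝔽 m n), A ∈ mball c₀ ρ ∧
          (∀ t, IsPoly (q t)) ∧
          0 < (⨆ l : Fin m, lnorm (q (Sum.inl l))) ∧
          (⨆ l : Fin m, lnorm (q (Sum.inl l))) < del R m n * R ^ ((n : ℝ) * (tau m n + i)) ∧
          (⨆ l' : Fin n, lnorm (Matrix.vecMul q (Abar A) (Sum.inl l'))) <
            del R m n * R ^ (-(m : ℝ) * (tau m n + i) - n)) →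
        ∀ v : Fin (m + 1) → (Fin n ⊕ Fin m → L 𝔽),
          (∀ r, (∀ t, IsPoly (v r t)) ∧ ∃ A ∈ mball c₀ ρ,
            0 < (⨆ l' : Fin n, lnorm (v r (Sum.inl l'))) ∧
            (⨆ l' : Fin n, lnorm (v r (Sum.inl l'))) <
              delStar R m n * R ^ ((m : ℝ) * (1 + i)) ∧
            (⨆ l : Fin m, lnorm (Matrix.vecMul (v r) (AbarStar A) (Sum.inl l))) <
              delStar R m n * R ^ (-(n : ℝ) * (1 + i) - m)) →
          ¬ LinearIndependent (L 𝔽) v := by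
  refine ⟨2, one_le_two, fun R hR i c₀ ρ hρ _ hq v hv => ?_⟩
  obtain ⟨A, hA, -⟩ := (hv 0).2
  refine subspace_one_general hn (one_lt_two.trans_le hR) i.cast_nonneg
    (fun ⟨q, hqA⟩ => hq ⟨q, c₀, mem_mball_self hA, hqA⟩) (fun r => (hv r).1) fun r => ?_
  obtain ⟨A, hA, -, hX, hY⟩ := (hv r).2
  exact ⟨A, hA.trans hρ.le, hX, hY⟩

end FSBad
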